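/- arXiv:2602.23162 — 6 statements merged into one kernel-verified Lean document; each statement's English description precedes it below -/
import Mathlib

section
/- Let f : ℝ → ℝ be continuous and suppose there are constants p ≥ 2, κ ≥ 0 and α₁, α₂ > 0 such that −κ − α₂|s|^p ≤ f(s)·s ≤ κ − α₁|s|^p for all s ∈ ℝ. Define F(s) = ∫₀ˢ f(r) dr. Then there exist constants α̃₁, α̃₂ > 0 and κ̃ ≥ 0 such that −α̃₂|s|^p − κ̃ ≤ F(s) ≤ κ̃ − α̃₁|s|^p for all s ∈ ℝ, and consequently there exists C̃ > 0 with |F(s)| ≤ C̃(1 + |s|^p) for all s ∈ ℝ. -/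
lemma key_bound (g : ℝ → ℝ) (hg : Continuous g) (p κ a b : ℝ) (hp : 2 ≤ p) (hκ : 0 ≤ κ)
    (hb : a / p < b) (h : ∀ s : ℝ, 0 ≤ s → g s * s ≤ κ + a * s ^ p) :
    ∃ K ≥ (0 : ℝ), ∀ s : ℝ, 0 ≤ s → ∫ r in (0 : ℝ)..s, g r ≤ K + b * s ^ p := by
  obtain ⟨M, hM⟩ := (isCompact_Icc (a := (0 : ℝ)) (b := 1)).exists_bound_of_continuousOn
    hg.continuousOn
  have hM0 : 0 ≤ M := le_trans (norm_nonneg _) (hM 0 (by simp))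
  have hpw : ∀ r : ℝ, 0 ≤ r → g r ≤ (M + κ + |a|) + a * r ^ (p - 1) := by
    intro r hr
    rcases le_total r 1 with h1 | h1
    · have h2 : g r ≤ M := le_trans (le_abs_self _) (hM r ⟨hr, h1⟩)
      have h3 : r ^ (p - 1) ≤ 1 := Real.rpow_le_one hr h1 (by linarith)
      have h4 : 0 ≤ r ^ (p - 1) := Real.rpow_nonneg hr _
      nlinarith [neg_abs_le a, abs_nonneg a]
    · have hr0 : 0 < r := by linarith
      have h2 := h r hr
      have h3 : r ^ p = r ^ (p - 1) * r := by
        rw [← Real.rpow_add_one hr0.ne']; congr 1; ring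
      rw [h3] at h2
      have h5 : (g r - a * r ^ (p - 1)) * r ≤ κ * r := by nlinarith
      have h6 := le_of_mul_le_mul_right h5 hr0
      linarith [abs_nonneg a]
  set A := M + κ + |a| with hA
  set c := b - a / p with hc
  have hc0 : 0 < c := by linarith
  refine ⟨c + A ^ 2 / (4 * c), by positivity, ?_⟩
  intro s hs
  have hcont : Continuous fun r : ℝ => r ^ (p - 1) :=
    Real.continuous_rpow_const (by linarith)
  have hint : ∫ r in (0 : ℝ)..s, g r ≤ ∫ r in (0 : ℝ)..s, (A + a * r ^ (p - 1)) := by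
    apply intervalIntegral.integral_mono_on hs (hg.intervalIntegrable _ _)
    · exact Continuous.intervalIntegrable (by fun_prop) _ _
    · intro x hx
      exact hpw x hx.1
  have hval : ∫ r in (0 : ℝ)..s, (A + a * r ^ (p - 1)) = A * s + a / p * s ^ p := by
    rw [intervalIntegral.integral_add (by simp)
      (Continuous.intervalIntegrable (by fun_prop) _ _),
      intervalIntegral.integral_const_mul, integral_rpow (Or.inl (by linarith))]
    simp only [intervalIntegral.integral_const, sub_add_cancel, smul_eq_mul]
    rw [Real.zero_rpow (by linarith)]
    ring
  have hsq : s ^ 2 - 1 ≤ s ^ p := by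
    rcases le_total s 1 with h1 | h1
    · have := Real.rpow_nonneg hs p
      nlinarith
    · have := Real.rpow_le_rpow_of_exponent_le h1 hp
      rw [Real.rpow_two] at this
      linarith
  have hy : A * s ≤ c * s ^ 2 + A ^ 2 / (4 * c) := by
    have : c * s ^ 2 + A ^ 2 / (4 * c) - A * s = (2 * c * s - A) ^ 2 / (4 * c) := by
      field_simp; ring
    have h2 : 0 ≤ (2 * c * s - A) ^ 2 / (4 * c) := by positivity
    linarith
  have hbe : b = c + a / p := by rw [hc]; ring
  rw [hbe]
  nlinarith [mul_le_mul_of_nonneg_left hsq hc0.le]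

/-- Under the dissipativity bounds on `f`, the primitive
`F(s) = ∫₀ˢ f(r) dr` satisfies `-α̃₂|s|^p - κ̃ ≤ F(s) ≤ κ̃ - α̃₁|s|^p` for some
`α̃₁, α̃₂ > 0`, `κ̃ ≥ 0`, and consequently `|F(s)| ≤ C̃(1 + |s|^p)` for some `C̃ > 0`. -/
theorem statement1 (f : ℝ → ℝ) (hf : Continuous f)
    (p κ α₁ α₂ : ℝ) (hp : 2 ≤ p) (hκ : 0 ≤ κ) (hα₁ : 0 < α₁) (hα₂ : 0 < α₂)
    (hlow : ∀ s : ℝ, -κ - α₂ * |s| ^ p ≤ f s * s)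
    (hup : ∀ s : ℝ, f s * s ≤ κ - α₁ * |s| ^ p)
    (F : ℝ → ℝ) (hF : ∀ s : ℝ, F s = ∫ r in (0 : ℝ)..s, f r) :
    (∃ α₁' > (0 : ℝ), ∃ α₂' > (0 : ℝ), ∃ κ' ≥ (0 : ℝ),
      ∀ s : ℝ, -α₂' * |s| ^ p - κ' ≤ F s ∧ F s ≤ κ' - α₁' * |s| ^ p) ∧
    (∃ C > (0 : ℝ), ∀ s : ℝ, |F s| ≤ C * (1 + |s| ^ p)) := by
  have hp0 : 0 < p := by linarith
  have hneg : ∀ s : ℝ, F (-s) = ∫ r in (0 : ℝ)..s, -f (-r) := by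
    intro s
    rw [hF, intervalIntegral.integral_neg, intervalIntegral.integral_comp_neg, neg_zero,
      intervalIntegral.integral_symm]
  have e1 : -α₁ / p < -(α₁ / (2 * p)) := by
    have : 0 < α₁ / (2 * p) := by positivity
    have h2 : -α₁ / p = -(2 * (α₁ / (2 * p))) := by field_simp
    linarith
  have e2 : α₂ / p < α₂ / p + 1 := by linarith
  obtain ⟨K1, hK1, h1⟩ := key_bound f hf p κ (-α₁) (-(α₁ / (2 * p))) hp hκ e1 (by
    intro s hs; have := hup s; rw [abs_of_nonneg hs] at this; linarith)
  obtain ⟨K2, hK2, h2⟩ := key_bound (fun r => -f (-r)) (by fun_prop) p κ (-α₁)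
    (-(α₁ / (2 * p))) hp hκ e1 (by
    intro s hs; have := hup (-s); rw [abs_neg, abs_of_nonneg hs] at this; linarith)
  obtain ⟨K3, hK3, h3⟩ := key_bound (fun r => -f r) (by fun_prop) p κ α₂ (α₂ / p + 1) hp hκ e2 (by
    intro s hs; have := hlow s; rw [abs_of_nonneg hs] at this; linarith)
  obtain ⟨K4, hK4, h4⟩ := key_bound (fun r => f (-r)) (by fun_prop) p κ α₂ (α₂ / p + 1)
    hp hκ e2 (by
    intro s hs; have := hlow (-s); rw [abs_neg, abs_of_nonneg hs] at this; linarith)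
  have hmain : ∀ s : ℝ, -(α₂ / p + 1) * |s| ^ p - (K1 + K2 + K3 + K4) ≤ F s ∧
      F s ≤ (K1 + K2 + K3 + K4) - α₁ / (2 * p) * |s| ^ p := by
    intro s
    rcases le_total 0 s with hs | hs
    · have a1 := h1 s hs
      have a3 := h3 s hs
      rw [intervalIntegral.integral_neg, ← hF] at a3
      rw [← hF] at a1
      rw [abs_of_nonneg hs]
      constructor <;> linarith
    · have hs' : 0 ≤ -s := by linarith
      have a2 := h2 (-s) hs'
      have a4 := h4 (-s) hs'
      have hn := hneg (-s)
      rw [neg_neg] at hn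
      rw [← hn] at a2
      rw [intervalIntegral.integral_neg] at hn
      rw [abs_of_nonpos hs]
      constructor <;> linarith
  refine ⟨⟨α₁ / (2 * p), by positivity, α₂ / p + 1, by positivity, K1 + K2 + K3 + K4,
    by positivity, hmain⟩, K1 + K2 + K3 + K4 + (α₂ / p + 1), by positivity, ?_⟩
  intro s
  obtain ⟨l, u⟩ := hmain s
  have hs : 0 ≤ |s| ^ p := by positivity
  have q1 : 0 ≤ α₁ / (2 * p) * |s| ^ p := by positivity
  have q2 : 0 ≤ (K1 + K2 + K3 + K4) * |s| ^ p := by positivity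
  have q3 : 0 < α₂ / p + 1 := by positivity
  have q4 : 0 ≤ (α₂ / p + 1) * |s| ^ p := by positivity
  rw [abs_le]
  constructor <;> linarith
end

section
/- Let (X,d) be a metric space and R ⊆ C([0,∞); X). If R satisfies (K1) and (K2), then every fixed point of R (a point z such that the constant map t ↦ z belongs to R) is a stationary point of G, i.e. z ∈ G(t,z) for all t ≥ 0. If R satisfies (K1)–(K4), then the fixed points of R and the stationary points of G coincide: z ∈ G(t,z) for all t ≥ 0 if and only if the constant map t ↦ z belongs to R. -/
open scoped NNReal
open Filter

/-- The multivalued map associated with a family `R` of trajectories: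
`G(t,x) = {φ(t) : φ ∈ R, φ(0) = x}`. -/
def msemiflowOf {X : Type*} (R : Set (ℝ≥0 → X)) (t : ℝ≥0) (x : X) : Set X :=
  {y | ∃ φ ∈ R, φ 0 = x ∧ φ t = y}

/-- (K1): for every `x` there is a trajectory starting at `x`. -/
def CondK1 {X : Type*} (R : Set (ℝ≥0 → X)) : Prop := ∀ x : X, ∃ φ ∈ R, φ 0 = x

/-- (K2): translation property. -/
def CondK2 {X : Type*} (R : Set (ℝ≥0 → X)) : Prop :=
  ∀ φ ∈ R, ∀ τ : ℝ≥0, (fun t => φ (t + τ)) ∈ R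

/-- (K3): concatenation property. -/
def CondK3 {X : Type*} (R : Set (ℝ≥0 → X)) : Prop :=
  ∀ φ₁ ∈ R, ∀ φ₂ ∈ R, ∀ s : ℝ≥0, 0 < s → φ₂ 0 = φ₁ s →
    (fun t => if t ≤ s then φ₁ t else φ₂ (t - s)) ∈ R

/-- (K4): compactness property. -/
def CondK4 {X : Type*} [MetricSpace X] (R : Set (ℝ≥0 → X)) : Prop :=
  ∀ (φ : ℕ → ℝ≥0 → X) (x₀ : X), (∀ n, φ n ∈ R) →
    Tendsto (fun n => φ n 0) atTop (nhds x₀) →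
    ∃ ψ : ℕ → ℕ, StrictMono ψ ∧ ∃ φ' ∈ R,
      ∀ t : ℝ≥0, Tendsto (fun k => φ (ψ k) t) atTop (nhds (φ' t))

theorem loop_iterate_aux {X : Type*} (R : Set (ℝ≥0 → X)) (h3 : CondK3 R) (z : X)
    (d : ℝ≥0) (hd : 0 < d) (φ : ℝ≥0 → X) (hφ : φ ∈ R) (h0 : φ 0 = z) (h1 : φ d = z) (N : ℕ) :
    ∃ χ ∈ R, ∀ k : ℕ, k ≤ N → χ (k * d) = z := by
  induction N with
  | zero =>
    refine ⟨φ, hφ, fun k hk => ?_⟩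
    obtain rfl : k = 0 := by omega
    simpa using h0
  | succ N ih =>
    obtain ⟨χ, hχ, hk⟩ := ih
    have hz : χ 0 = z := by simpa using hk 0 (Nat.zero_le _)
    refine ⟨_, h3 φ hφ χ hχ d hd (hz.trans h1.symm), fun k hkN => ?_⟩
    rcases k with _ | j
    · simpa using h0
    · have e : ((j + 1 : ℕ) : ℝ≥0) * d = j * d + d := by push_cast; ring
      simp only [e, add_tsub_cancel_right]
      split_ifs with hle
      · have hj : (j : ℝ≥0) * d = 0 := by
          have : (j : ℝ≥0) * d + d ≤ 0 + d := by simpa using hle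
          exact le_antisymm (le_of_add_le_add_right this) zero_le
        rw [hj, zero_add, h1]
      · exact hk j (by omega)

/-- If `R` satisfies (K1), (K2), then every fixed point of `R`
(a point `z` with the constant map `t ↦ z` in `R`) is a stationary point of `G`
(`z ∈ G(t,z)` for all `t ≥ 0`). If `R` satisfies (K1)–(K4), then the fixed points
of `R` and the stationary points of `G` coincide. -/
theorem statement13 {X : Type*} [MetricSpace X] (R : Set (ℝ≥0 → X))
    (hRc : ∀ φ ∈ R, Continuous φ) :
    (CondK1 R → CondK2 R →
      ∀ z : X, (fun _ : ℝ≥0 => z) ∈ R → ∀ t : ℝ≥0, z ∈ msemiflowOf R t z) ∧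
    (CondK1 R → CondK2 R → CondK3 R → CondK4 R →
      ∀ z : X, ((∀ t : ℝ≥0, z ∈ msemiflowOf R t z) ↔ (fun _ : ℝ≥0 => z) ∈ R)) := by
  have key : CondK1 R → CondK2 R →
      ∀ z : X, (fun _ : ℝ≥0 => z) ∈ R → ∀ t : ℝ≥0, z ∈ msemiflowOf R t z :=
    fun _ _ z hz t => ⟨_, hz, rfl, rfl⟩
  refine ⟨key, fun h1 h2 h3 h4 z => ⟨fun hs => ?_, key h1 h2 z⟩⟩
  have hex : ∀ n : ℕ, ∃ χ ∈ R, ∀ k : ℕ, k ≤ n * 2 ^ n → χ (k * (1 / 2 ^ n)) = z := by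
    intro n
    obtain ⟨φ, hφ, h0, hd⟩ := hs (1 / 2 ^ n)
    exact loop_iterate_aux R h3 z _ (by positivity) φ hφ h0 hd _
  choose χ hχ hk using hex
  have hχ0 : ∀ n, χ n 0 = z := fun n => by simpa using hk n 0 (Nat.zero_le _)
  obtain ⟨ψ, hψ, φ, hφ, hlim⟩ := h4 χ z hχ (by simp only [hχ0]; exact tendsto_const_nhds)
  have hdy : ∀ k m : ℕ, φ ((k : ℝ≥0) / 2 ^ m) = z := by
    intro k m
    refine tendsto_nhds_unique (hlim _) (tendsto_const_nhds.congr' ?_)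
    filter_upwards [eventually_ge_atTop (max k m)] with i hi
    have hi' := hi.trans (hψ.id_le i)
    obtain ⟨r, hr⟩ := Nat.exists_eq_add_of_le ((le_max_right k m).trans hi')
    have hkn := (le_max_left k m).trans hi'
    have := hk (ψ i) (k * 2 ^ r)
      (Nat.mul_le_mul hkn (Nat.pow_le_pow_right (by norm_num) (by omega)))
    rw [← this]
    congr 1
    rw [hr]
    push_cast
    field_simp
    try ring
  have hc : φ = fun _ => z := by
    funext t
    have ht : Tendsto (fun m : ℕ => ((⌊(t : ℝ) * 2 ^ m⌋₊ : ℕ) : ℝ≥0) / 2 ^ m) atTop (nhds t) := by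
      have hp : Tendsto (fun m : ℕ => (2 : ℝ) ^ m) atTop atTop :=
        tendsto_pow_atTop_atTop_of_one_lt (by norm_num)
      have := (tendsto_nat_floor_mul_div_atTop (R := ℝ) t.2).comp hp
      rw [← NNReal.tendsto_coe]
      refine this.congr fun m => ?_
      simp [Function.comp]
    have h := ((hRc φ hφ).tendsto t).comp ht
    refine tendsto_nhds_unique h ?_
    simp only [Function.comp_def, hdy]
    exact tendsto_const_nhds
  exact hc ▸ hφ
end

section
/- Let (X,d) be a metric space and R ⊆ C([0,∞); X) satisfy (K1)–(K4). Then a map γ : ℝ → X is a complete trajectory of R (i.e. γ(·+h)|_{[0,∞)} ∈ R for every h ∈ ℝ) if and only if γ is continuous and is a complete trajectory of G, i.e. γ(t+s) ∈ G(t,γ(s)) for all s ∈ ℝ and t ≥ 0. -/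
open scoped NNReal
open Filter

theorem chain_aux {X : Type*} (R : Set (ℝ≥0 → X))
    (hK3 : ∀ φ₁ ∈ R, ∀ φ₂ ∈ R, ∀ s : ℝ≥0, 0 < s → φ₂ 0 = φ₁ s →
      (fun t => if t ≤ s then φ₁ t else φ₂ (t - s)) ∈ R)
    (γ : ℝ → X)
    (hG : ∀ (s : ℝ) (t : ℝ≥0), γ ((t : ℝ) + s) ∈ msemiflowOf R t (γ s))
    (δ : ℝ≥0) (hδ : 0 < δ) (N : ℕ) : ∀ s : ℝ, ∃ φ ∈ R,
      ∀ k : ℕ, k ≤ N → φ (k * δ) = γ (((k * δ : ℝ≥0) : ℝ) + s) := by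
  induction N with
  | zero =>
    intro s
    obtain ⟨φ, hφ, h0, -⟩ := hG s 0
    refine ⟨φ, hφ, fun k hk => ?_⟩
    obtain rfl : k = 0 := by omega
    simpa using h0
  | succ N ih =>
    intro s
    obtain ⟨φ₁, h1, h10, h11⟩ := hG s δ
    obtain ⟨φ₂, h2, h2k⟩ := ih (δ + s)
    have h20 : φ₂ 0 = φ₁ δ := by
      have := h2k 0 (Nat.zero_le _)
      rw [h11]
      simpa using this
    refine ⟨_, hK3 φ₁ h1 φ₂ h2 δ hδ h20, fun k hk => ?_⟩
    rcases k with _ | k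
    · simpa using h10
    · have e : ((k + 1 : ℕ) : ℝ≥0) * δ = k * δ + δ := by push_cast; ring
      have e2 : γ (((k * δ + δ : ℝ≥0) : ℝ) + s) = φ₂ (k * δ) := by
        rw [h2k k (by omega)]
        congr 1
        push_cast
        ring
      rw [e, e2]
      split_ifs with hle
      · have hz : (k : ℝ≥0) * δ = 0 := by simpa using hle
        rw [hz, zero_add, h20]
      · simp

/-- Under (K1)–(K4), a map `γ : ℝ → X` is a complete trajectory of
`R` (i.e. `γ(·+h)|_{[0,∞)} ∈ R` for all `h ∈ ℝ`) iff it is continuous and a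
complete trajectory of `G` (i.e. `γ(t+s) ∈ G(t,γ(s))` for all `s ∈ ℝ`, `t ≥ 0`). -/
theorem statement14 {X : Type*} [MetricSpace X] (R : Set (ℝ≥0 → X))
    (hRc : ∀ φ ∈ R, Continuous φ)
    (hK1 : ∀ x : X, ∃ φ ∈ R, φ 0 = x)
    (hK2 : ∀ φ ∈ R, ∀ τ : ℝ≥0, (fun t => φ (t + τ)) ∈ R)
    (hK3 : ∀ φ₁ ∈ R, ∀ φ₂ ∈ R, ∀ s : ℝ≥0, 0 < s → φ₂ 0 = φ₁ s →
      (fun t => if t ≤ s then φ₁ t else φ₂ (t - s)) ∈ R)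
    (hK4 : ∀ (φ : ℕ → ℝ≥0 → X) (x₀ : X), (∀ n, φ n ∈ R) →
      Tendsto (fun n => φ n 0) atTop (nhds x₀) →
      ∃ ψ : ℕ → ℕ, StrictMono ψ ∧ ∃ φ' ∈ R,
        ∀ t : ℝ≥0, Tendsto (fun k => φ (ψ k) t) atTop (nhds (φ' t)))
    (γ : ℝ → X) :
    (∀ h : ℝ, (fun t : ℝ≥0 => γ ((t : ℝ) + h)) ∈ R) ↔
    (Continuous γ ∧ ∀ (s : ℝ) (t : ℝ≥0), γ ((t : ℝ) + s) ∈ msemiflowOf R t (γ s)) := by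
  constructor
  · intro H
    refine ⟨?_, fun s t => ⟨_, H s, by simp, rfl⟩⟩
    rw [continuous_iff_continuousAt]
    intro x
    have hc : Continuous fun y : ℝ => γ (((y - (x - 1)).toNNReal : ℝ) + (x - 1)) :=
      (hRc _ (H (x - 1))).comp (continuous_real_toNNReal.comp (continuous_id.sub continuous_const))
    refine hc.continuousAt.congr ?_
    filter_upwards [lt_mem_nhds (show x - 1 < x by linarith)] with y hy
    rw [Real.coe_toNNReal _ (by linarith)]
    congr 1
    ring
  · rintro ⟨hγ, hG⟩ h
    have hch : ∀ n : ℕ, ∃ φ ∈ R, ∀ k : ℕ, k ≤ 2 ^ n * 2 ^ n →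
        φ (k * (2 ^ n)⁻¹) = γ (((k * (2 ^ n)⁻¹ : ℝ≥0) : ℝ) + h) := fun n =>
      chain_aux R hK3 γ hG ((2 ^ n)⁻¹) (by positivity) (2 ^ n * 2 ^ n) h
    choose φ hφR hφ using hch
    have h0 : ∀ n, φ n 0 = γ h := fun n => by simpa using hφ n 0 (Nat.zero_le _)
    obtain ⟨ψ, hψ, φ', hφ', hlim⟩ := hK4 φ (γ h) hφR (by simp [h0])
    have hdy : ∀ m j : ℕ, φ' (j * (2 ^ m)⁻¹) = γ (((j * (2 ^ m)⁻¹ : ℝ≥0) : ℝ) + h) := by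
      intro m j
      refine tendsto_nhds_unique (hlim _) (tendsto_const_nhds.congr' ?_)
      filter_upwards [eventually_ge_atTop (max m j)] with k hk
      have hk' : max m j ≤ ψ k := hk.trans hψ.le_apply
      generalize ψ k = n at hk'
      obtain ⟨d, rfl⟩ := Nat.exists_eq_add_of_le (le_of_max_le_left hk')
      have e : (j : ℝ≥0) * (2 ^ m)⁻¹ = ((j * 2 ^ d : ℕ) : ℝ≥0) * (2 ^ (m + d))⁻¹ := by
        push_cast
        rw [pow_add]
        field_simp
      rw [e, hφ]
      have hj : j ≤ 2 ^ (m + d) := (le_of_max_le_right hk').trans Nat.lt_two_pow_self.le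
      exact Nat.mul_le_mul hj (Nat.pow_le_pow_right (by norm_num) (by omega))
    have hc' := hRc φ' hφ'
    have : (fun t : ℝ≥0 => γ ((t : ℝ) + h)) = φ' := by
      funext t
      have hcγ : Continuous fun t : ℝ≥0 => γ ((t : ℝ) + h) := by fun_prop
      have ht : Tendsto (fun m : ℕ => ((⌊(t : ℝ) * 2 ^ m⌋₊ : ℕ) : ℝ≥0) * (2 ^ m)⁻¹) atTop (nhds t) := by
        rw [← NNReal.tendsto_coe]
        have := (tendsto_nat_floor_mul_div_atTop (R := ℝ) (a := (t : ℝ)) t.2).comp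
          (tendsto_pow_atTop_atTop_of_one_lt (r := (2 : ℝ)) (by norm_num))
        refine this.congr fun m => ?_
        simp [ div_eq_mul_inv]
      refine tendsto_nhds_unique ((hcγ.tendsto t).comp ht) (((hc'.tendsto t).comp ht).congr ?_)
      intro m
      exact hdy m _
    rw [this]
    exact hφ'
end

section
/- Let (X,d) be a metric space and G a strict multivalued semiflow on X. Let A ⊆ X be closed, negatively invariant (A ⊆ G(τ,A) for all τ ≥ 0), and such that dist_X(G(t,A), A) → 0 as t → +∞, where dist_X is the Hausdorff semidistance. Then A is positively invariant: G(t,A) ⊆ A for all t ≥ 0, hence A is strictly invariant. -/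
open scoped NNReal ENNReal
open Filter

/-- `G(t,B) = ⋃_{y ∈ B} G(t,y)`. -/
def imageSet {X : Type*} (G : ℝ≥0 → X → Set X) (t : ℝ≥0) (B : Set X) : Set X :=
  ⋃ y ∈ B, G t y

/-- The Hausdorff semidistance `dist_X(C,D) = sup_{c ∈ C} inf_{d ∈ D} d(c,d)`
(valued in `ℝ≥0∞`). -/
noncomputable def hausSemidist {X : Type*} [MetricSpace X] (C D : Set X) : ℝ≥0∞ :=
  ⨆ c ∈ C, EMetric.infEdist c D

/-- For a strict multivalued semiflow `G`, if `A` is closed,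
negatively invariant (`A ⊆ G(τ,A)` for all `τ ≥ 0`) and
`dist_X(G(t,A),A) → 0` as `t → ∞`, then `A` is positively invariant:
`G(t,A) ⊆ A` for all `t ≥ 0` (hence strictly invariant). -/
theorem statement16 {X : Type*} [MetricSpace X] (G : ℝ≥0 → X → Set X)
    (hne : ∀ (t : ℝ≥0) (x : X), (G t x).Nonempty)
    (hG0 : ∀ x : X, G 0 x = {x})
    (hstrict : ∀ (t s : ℝ≥0) (x : X), G (t + s) x = imageSet G t (G s x))
    (A : Set X) (hA : IsClosed A)
    (hneg : ∀ τ : ℝ≥0, A ⊆ imageSet G τ A)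
    (hattr : Tendsto (fun t : ℝ≥0 => hausSemidist (imageSet G t A) A)
      atTop (nhds 0)) :
    ∀ t : ℝ≥0, imageSet G t A ⊆ A := by
  intro t x hx
  have hmem : ∀ τ : ℝ≥0, x ∈ imageSet G (t + τ) A := by
    intro τ
    simp only [imageSet, Set.mem_iUnion] at hx ⊢
    obtain ⟨y, hy, hxy⟩ := hx
    have h := hneg τ hy
    simp only [imageSet, Set.mem_iUnion] at h
    obtain ⟨z, hz, hyz⟩ := h
    refine ⟨z, hz, ?_⟩
    rw [hstrict]
    simp only [imageSet, Set.mem_iUnion]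
    exact ⟨y, hyz, hxy⟩
  have h0 : EMetric.infEdist x A ≤ 0 := by
    refine ge_of_tendsto hattr ?_
    filter_upwards [eventually_ge_atTop t] with s hs
    have h := hmem (s - t)
    rw [add_tsub_cancel_of_le hs] at h
    exact le_iSup₂ (f := fun c (_ : c ∈ imageSet G s A) => EMetric.infEdist c A) x h
  have hneA : A.Nonempty := by
    simp only [imageSet, Set.mem_iUnion] at hx
    obtain ⟨y, hy, _⟩ := hx
    exact ⟨y, hy⟩
  rw [← hA.closure_eq]
  exact EMetric.mem_closure_iff_infEdist_zero.2 (le_antisymm h0 bot_le)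
end

section
/- Let (X,d) be a metric space and G a multivalued semiflow on X such that for each t ≥ 0 the map x ↦ G(t,x) is upper semicontinuous with closed values. Suppose there exists a compact set K ⊆ X such that dist_X(G(t,B), K) → 0 as t → +∞ for every bounded set B ⊆ X. Then G possesses a global compact attractor A: a compact set that is negatively invariant (A ⊆ G(t,A) for all t ≥ 0) and attracts every bounded set, and which is the minimal closed set attracting every bounded set. If, moreover, G is strict, then A is invariant: G(t,A) = A for all t ≥ 0. -/
open scoped NNReal ENNReal
open Filter Bornology

open scoped Topology

/-- Closed graph property of an upper semicontinuous map with closed values. -/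
lemma closed_graph_aux {X : Type*} [MetricSpace X] (g : X → Set X)
    (husc : ∀ (x : X), ∀ O : Set X, IsOpen O → g x ⊆ O →
      ∃ δ > (0 : ℝ), ∀ y : X, dist y x < δ → g y ⊆ O)
    (hclosed : ∀ x : X, IsClosed (g x)) (z u : ℕ → X) (a b : X)
    (hz : Tendsto z atTop (𝓝 a)) (hu : Tendsto u atTop (𝓝 b))
    (h : ∀ n, u n ∈ g (z n)) : b ∈ g a := by
  by_contra hb
  obtain ⟨ε, hε, hball⟩ := Metric.isOpen_iff.1 (hclosed a).isOpen_compl b hb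
  have hsub : g a ⊆ (Metric.closedBall b (ε / 2))ᶜ := by
    intro x hx hx'
    have : x ∈ Metric.ball b ε := by
      rw [Metric.mem_closedBall] at hx'
      rw [Metric.mem_ball]; linarith
    exact hball this hx
  obtain ⟨δ, hδ, H⟩ := husc a _ Metric.isClosed_closedBall.isOpen_compl hsub
  have h1 : ∀ᶠ n in atTop, dist (z n) a < δ := (Metric.tendsto_nhds.1 hz) δ hδ
  have h2 : ∀ᶠ n in atTop, dist (u n) b < ε / 2 := (Metric.tendsto_nhds.1 hu) _ (by linarith)
  obtain ⟨n, hn1, hn2⟩ := (h1.and h2).exists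
  exact H _ hn1 (h n) (Metric.mem_closedBall.2 hn2.le)

/-- A sequence approaching a compact set has a subsequence converging into it. -/
lemma subseq_aux {X : Type*} [MetricSpace X] {K : Set X} (hK : IsCompact K) (u : ℕ → X)
    (hu : Tendsto (fun n => Metric.infEDist (u n) K) atTop (𝓝 0)) :
    ∃ y ∈ K, ∃ φ : ℕ → ℕ, StrictMono φ ∧ Tendsto (u ∘ φ) atTop (𝓝 y) := by
  have hKne : K.Nonempty := by
    rw [Set.nonempty_iff_ne_empty]
    rintro rfl
    obtain ⟨n, hn⟩ := (hu.eventually (gt_mem_nhds (zero_lt_one (α := ℝ≥0∞)))).exists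
    simp at hn
  choose k hkK hk using fun n => hK.exists_infEDist_eq_edist hKne (u n)
  obtain ⟨y, hy, φ, hφ, hlim⟩ := hK.tendsto_subseq hkK
  refine ⟨y, hy, φ, hφ, ?_⟩
  rw [tendsto_iff_edist_tendsto_0] at hlim ⊢
  have h1 : Tendsto (fun n => Metric.infEDist (u (φ n)) K + edist ((k ∘ φ) n) y) atTop
      (𝓝 (0 + 0)) := (hu.comp hφ.tendsto_atTop).add hlim
  rw [add_zero] at h1
  refine tendsto_of_tendsto_of_tendsto_of_le_of_le tendsto_const_nhds h1 (fun _ => zero_le) ?_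
  intro n
  simp only [Function.comp, hk]
  exact edist_triangle _ _ _

/-- The omega-limit set of `B`. -/
def omegaSet {X : Type*} [MetricSpace X] (G : ℝ≥0 → X → Set X) (B : Set X) : Set X :=
  {y | ∃ (t : ℕ → ℝ≥0) (u : ℕ → X), Tendsto t atTop atTop ∧
    (∀ n, u n ∈ imageSet G (t n) B) ∧ Tendsto u atTop (𝓝 y)}

lemma infEDist_le_haus {X : Type*} [MetricSpace X] {C D : Set X} {c : X} (hc : c ∈ C) :
    Metric.infEDist c D ≤ hausSemidist C D :=
  le_iSup₂ (f := fun c (_ : c ∈ C) => Metric.infEDist c D) c hc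

lemma seq_infEDist {X : Type*} [MetricSpace X] {G : ℝ≥0 → X → Set X} {B K : Set X}
    (hattr : Tendsto (fun t : ℝ≥0 => hausSemidist (imageSet G t B) K) atTop (𝓝 0))
    {t : ℕ → ℝ≥0} {u : ℕ → X} (ht : Tendsto t atTop atTop)
    (hu : ∀ n, u n ∈ imageSet G (t n) B) :
    Tendsto (fun n => Metric.infEDist (u n) K) atTop (𝓝 0) :=
  tendsto_of_tendsto_of_tendsto_of_le_of_le tendsto_const_nhds (hattr.comp ht)
    (fun _ => zero_le) (fun n => infEDist_le_haus (hu n))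

lemma omega_sub {X : Type*} [MetricSpace X] {G : ℝ≥0 → X → Set X} {B C : Set X}
    (hC : IsClosed C)
    (hattr : Tendsto (fun t : ℝ≥0 => hausSemidist (imageSet G t B) C) atTop (𝓝 0)) :
    omegaSet G B ⊆ C := by
  rintro y ⟨t, u, ht, hu, hy⟩
  have h1 := seq_infEDist hattr ht hu
  have h2 : Tendsto (fun n => Metric.infEDist (u n) C) atTop (𝓝 (Metric.infEDist y C)) :=
    (Metric.continuous_infEDist.tendsto y).comp hy
  exact (Metric.mem_iff_infEDist_zero_of_closed hC).2 (tendsto_nhds_unique h2 h1)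

lemma omega_neg {X : Type*} [MetricSpace X] {G : ℝ≥0 → X → Set X} {B K : Set X}
    (hsemi : ∀ (t s : ℝ≥0) (x : X), G (t + s) x ⊆ imageSet G t (G s x))
    (husc : ∀ (t : ℝ≥0) (x : X), ∀ O : Set X, IsOpen O → G t x ⊆ O →
      ∃ δ > (0 : ℝ), ∀ y : X, dist y x < δ → G t y ⊆ O)
    (hclosed : ∀ (t : ℝ≥0) (x : X), IsClosed (G t x)) (hK : IsCompact K)
    (hattr : Tendsto (fun t : ℝ≥0 => hausSemidist (imageSet G t B) K) atTop (𝓝 0))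
    (r : ℝ≥0) : omegaSet G B ⊆ imageSet G r (omegaSet G B) := by
  rintro y ⟨t, u, ht, hu, hy⟩
  obtain ⟨N, hN⟩ := eventually_atTop.1 (ht.eventually_ge_atTop r)
  have key : ∀ n, ∃ z, z ∈ imageSet G (t (n + N) - r) B ∧ u (n + N) ∈ G r z := by
    intro n
    have h := hu (n + N)
    simp only [imageSet, Set.mem_iUnion, exists_prop] at h ⊢
    obtain ⟨b, hb, h⟩ := h
    rw [← add_tsub_cancel_of_le (hN (n + N) (by omega))] at h
    have h' := hsemi _ _ _ h
    simp only [imageSet, Set.mem_iUnion, exists_prop] at h'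
    obtain ⟨z, hz, hz'⟩ := h'
    exact ⟨z, ⟨b, hb, hz⟩, hz'⟩
  choose z hz hzu using key
  have hs : Tendsto (fun n => t (n + N) - r) atTop atTop := by
    rw [tendsto_atTop]
    intro c
    filter_upwards [((tendsto_add_atTop_iff_nat N).2 ht).eventually_ge_atTop (c + r)] with n hn
    exact le_tsub_of_add_le_right hn
  obtain ⟨w, -, φ, hφ, hw⟩ := subseq_aux hK z (seq_infEDist hattr hs hz)
  have hu' := ((tendsto_add_atTop_iff_nat N).2 hy).comp hφ.tendsto_atTop
  simp only [imageSet, Set.mem_iUnion, exists_prop]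
  exact ⟨w, ⟨_, _, hs.comp hφ.tendsto_atTop, fun n => hz (φ n), hw⟩,
    closed_graph_aux (G r) (husc r) (hclosed r) _ _ _ _ hw hu' fun n => hzu (φ n)⟩

lemma omega_attr {X : Type*} [MetricSpace X] {G : ℝ≥0 → X → Set X} {B K A : Set X}
    (hK : IsCompact K)
    (hattr : Tendsto (fun t : ℝ≥0 => hausSemidist (imageSet G t B) K) atTop (𝓝 0))
    (hA : omegaSet G B ⊆ A) :
    Tendsto (fun t : ℝ≥0 => hausSemidist (imageSet G t B) A) atTop (𝓝 0) := by
  rw [ENNReal.tendsto_nhds_zero]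
  intro ε hε
  by_contra hcon
  rw [not_eventually] at hcon
  have key : ∀ n : ℕ, ∃ t : ℝ≥0, (n : ℝ≥0) ≤ t ∧ ∃ u ∈ imageSet G t B,
      ε < Metric.infEDist u A := by
    intro n
    obtain ⟨t, ht, h⟩ := frequently_atTop.1 hcon n
    refine ⟨t, ht, ?_⟩
    by_contra! h'
    exact h (iSup₂_le h')
  choose t ht u hu hlt using key
  have htt : Tendsto t atTop atTop := tendsto_atTop_mono ht tendsto_natCast_atTop_atTop
  obtain ⟨y, -, φ, hφ, hy⟩ := subseq_aux hK u (seq_infEDist hattr htt hu)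
  have hyA : y ∈ A := hA ⟨_, _, htt.comp hφ.tendsto_atTop, fun n => hu (φ n), hy⟩
  have h2 : Tendsto (fun n => Metric.infEDist ((u ∘ φ) n) A) atTop
      (𝓝 (Metric.infEDist y A)) :=
    (Metric.continuous_infEDist.tendsto y).comp hy
  rw [Metric.infEDist_zero_of_mem hyA] at h2
  obtain ⟨n, hn⟩ := (h2.eventually (gt_mem_nhds hε)).exists
  exact absurd hn (not_lt.2 (hlt (φ n)).le)

lemma imageSet_mono' {X : Type*} {G : ℝ≥0 → X → Set X} {t : ℝ≥0} {A B : Set X}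
    (h : A ⊆ B) : imageSet G t A ⊆ imageSet G t B :=
  Set.biUnion_subset_biUnion_left h

/-- If the multivalued semiflow `G` has, for each `t ≥ 0`, an upper
semicontinuous map `x ↦ G(t,x)` with closed values, and there is a compact set `K`
with `dist_X(G(t,B),K) → 0` for every bounded `B`, then `G` has a global compact
attractor `A`: a compact, negatively invariant set attracting every bounded set,
minimal among closed sets attracting every bounded set; and if `G` is strict then
`A` is invariant. -/
theorem statement18 {X : Type*} [MetricSpace X] (G : ℝ≥0 → X → Set X)
    (hne : ∀ (t : ℝ≥0) (x : X), (G t x).Nonempty)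
    (hG0 : ∀ x : X, G 0 x = {x})
    (hsemi : ∀ (t s : ℝ≥0) (x : X), G (t + s) x ⊆ imageSet G t (G s x))
    (husc : ∀ (t : ℝ≥0) (x : X), ∀ O : Set X, IsOpen O → G t x ⊆ O →
      ∃ δ > (0 : ℝ), ∀ y : X, dist y x < δ → G t y ⊆ O)
    (hclosed : ∀ (t : ℝ≥0) (x : X), IsClosed (G t x))
    (K : Set X) (hKcomp : IsCompact K)
    (hattr : ∀ B : Set X, IsBounded B →
      Tendsto (fun t : ℝ≥0 => hausSemidist (imageSet G t B) K) atTop (nhds 0)) :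
    ∃ A : Set X, IsCompact A ∧
      (∀ t : ℝ≥0, A ⊆ imageSet G t A) ∧
      (∀ B : Set X, IsBounded B →
        Tendsto (fun t : ℝ≥0 => hausSemidist (imageSet G t B) A) atTop (nhds 0)) ∧
      (∀ C : Set X, IsClosed C →
        (∀ B : Set X, IsBounded B →
          Tendsto (fun t : ℝ≥0 => hausSemidist (imageSet G t B) C) atTop (nhds 0)) →
        A ⊆ C) ∧
      ((∀ (t s : ℝ≥0) (x : X), G (t + s) x = imageSet G t (G s x)) →
        ∀ t : ℝ≥0, imageSet G t A = A) := by
  set U : Set X := ⋃ B ∈ {B : Set X | IsBounded B}, omegaSet G B with hU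
  have hsubU : ∀ B : Set X, IsBounded B → omegaSet G B ⊆ U := fun B hB =>
    Set.subset_biUnion_of_mem (u := fun B => omegaSet G B) hB
  have hUK : U ⊆ K := Set.iUnion₂_subset fun B hB => omega_sub hKcomp.isClosed (hattr B hB)
  have hUneg : ∀ r, U ⊆ imageSet G r U := fun r => Set.iUnion₂_subset fun B hB =>
    (omega_neg hsemi husc hclosed hKcomp (hattr B hB) r).trans (imageSet_mono' (hsubU B hB))
  have hAK : closure U ⊆ K := closure_minimal hUK hKcomp.isClosed
  have hAc : IsCompact (closure U) := hKcomp.of_isClosed_subset isClosed_closure hAK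
  have hAneg : ∀ r, closure U ⊆ imageSet G r (closure U) := by
    intro r a ha
    obtain ⟨u, huU, hu⟩ := mem_closure_iff_seq_limit.1 ha
    have key : ∀ n, ∃ z ∈ U, u n ∈ G r z := by
      intro n
      simpa only [imageSet, Set.mem_iUnion, exists_prop] using hUneg r (huU n)
    choose z hz hzu using key
    obtain ⟨w, hw, φ, hφ, hlim⟩ := hAc.tendsto_subseq (fun n => subset_closure (hz n))
    simp only [imageSet, Set.mem_iUnion, exists_prop]
    exact ⟨w, hw, closed_graph_aux (G r) (husc r) (hclosed r) _ _ _ _ hlim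
      (hu.comp hφ.tendsto_atTop) fun n => hzu (φ n)⟩
  have hAattr : ∀ B : Set X, IsBounded B →
      Tendsto (fun t : ℝ≥0 => hausSemidist (imageSet G t B) (closure U)) atTop (nhds 0) :=
    fun B hB => omega_attr hKcomp (hattr B hB) ((hsubU B hB).trans subset_closure)
  refine ⟨closure U, hAc, hAneg, hAattr, ?_, ?_⟩
  · intro C hC hCattr
    exact closure_minimal
      (Set.iUnion₂_subset fun B hB => omega_sub hC (hCattr B hB)) hC
  · intro hstrict t
    refine Set.Subset.antisymm ?_ (hAneg t)
    intro y hy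
    rw [Metric.mem_iff_infEDist_zero_of_closed isClosed_closure]
    have hmem : ∀ s, y ∈ imageSet G (t + s) (closure U) := by
      intro s
      have h := imageSet_mono' (hAneg s) hy
      simp only [imageSet, Set.mem_iUnion, exists_prop] at h ⊢
      obtain ⟨x, ⟨a, ha, hx⟩, hyx⟩ := h
      refine ⟨a, ha, ?_⟩
      rw [hstrict]
      simp only [imageSet, Set.mem_iUnion, exists_prop]
      exact ⟨x, hx, hyx⟩
    have hlim := (hAattr _ hAc.isBounded).comp 
      (tendsto_atTop_mono (fun s : ℝ≥0 => (le_add_self : s ≤ t + s)) tendsto_id)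
    exact le_antisymm (ge_of_tendsto' hlim fun s => infEDist_le_haus (hmem s)) zero_le
end

section
/- Let (X,d) be a metric space and R ⊆ C([0,∞); X) satisfy (K1), (K2) and (K4), and let G(t,x) = {φ(t) : φ ∈ R, φ(0) = x} be the induced multivalued semiflow. Assume G possesses a compact global attractor A (a compact negatively invariant set attracting every bounded set). Then A = {γ(0) : γ ∈ K} = ⋃_{t∈ℝ} {γ(t) : γ ∈ K}, where K denotes the set of all complete trajectories of R that are bounded in X. -/
open scoped NNReal ENNReal
open Filter Bornology

/-- `G(t,B) = ⋃_{y ∈ B} G(t,y)`. -/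
def msemiflowOfSet {X : Type*} (R : Set (ℝ≥0 → X)) (t : ℝ≥0) (B : Set X) : Set X :=
  ⋃ y ∈ B, msemiflowOf R t y

/-- `γ : ℝ → X` is a bounded complete trajectory of `R`:
`γ(·+h)|_{[0,∞)} ∈ R` for every `h ∈ ℝ` and its range is bounded in `X`. -/
def BddCompleteTraj {X : Type*} [MetricSpace X] (R : Set (ℝ≥0 → X)) (γ : ℝ → X) : Prop :=
  (∀ h : ℝ, (fun t : ℝ≥0 => γ ((t : ℝ) + h)) ∈ R) ∧ IsBounded (Set.range γ)

open Topology in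
lemma aux_subseq {X : Type*} [MetricSpace X] {A : Set X} (hA : IsCompact A) (hne : A.Nonempty)
    (x : ℕ → X) (hx : Tendsto (fun k => Metric.infEDist (x k) A) atTop (𝓝 0)) :
    ∃ a ∈ A, ∃ σ : ℕ → ℕ, StrictMono σ ∧ Tendsto (fun k => x (σ k)) atTop (𝓝 a) := by
  choose y hyA hy using fun k => hA.exists_infEDist_eq_edist hne (x k)
  obtain ⟨a, ha, σ, hσ, hlim⟩ := hA.tendsto_subseq hyA
  refine ⟨a, ha, σ, hσ, ?_⟩
  rw [tendsto_iff_edist_tendsto_0] at hlim ⊢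
  have h1 := (hx.comp hσ.tendsto_atTop).add hlim
  rw [add_zero] at h1
  refine tendsto_of_tendsto_of_tendsto_of_le_of_le tendsto_const_nhds h1 (fun _ => zero_le) ?_
  intro k
  simp only [Function.comp, hy]
  exact edist_triangle _ _ _

open Topology in
lemma aux_attr {X : Type*} [MetricSpace X] {R : Set (ℝ≥0 → X)} {A B : Set X}
    (h : Tendsto (fun t : ℝ≥0 => hausSemidist (msemiflowOfSet R t B) A) atTop (𝓝 0))
    (φ : ℕ → ℝ≥0 → X) (hφ : ∀ n, φ n ∈ R) (h0 : ∀ n, φ n 0 ∈ B) (τ : ℕ → ℝ≥0)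
    (hτ : Tendsto τ atTop atTop) :
    Tendsto (fun k => Metric.infEDist (φ k (τ k)) A) atTop (𝓝 0) := by
  refine tendsto_of_tendsto_of_tendsto_of_le_of_le tendsto_const_nhds (h.comp hτ)
    (fun _ => zero_le) ?_
  intro k
  have hm : φ k (τ k) ∈ msemiflowOfSet R (τ k) B := by
    simp only [msemiflowOfSet, Set.mem_iUnion]
    exact ⟨_, h0 k, φ k, hφ k, rfl, rfl⟩
  exact le_iSup₂ (f := fun c (_ : c ∈ msemiflowOfSet R (τ k) B) => Metric.infEDist c A) _ hm

open Topology in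
lemma aux_tau (ρ : ℕ → ℕ) (hρ : StrictMono ρ) (m : ℕ) (t : ℝ≥0) :
    Tendsto (fun k => t + ((ρ k : ℝ≥0) - (m : ℝ≥0))) atTop atTop := by
  have h1 : Tendsto (fun k => ((ρ k - m : ℕ) : ℝ≥0)) atTop atTop :=
    tendsto_natCast_atTop_atTop.comp ((tendsto_sub_atTop_nat m).comp hρ.tendsto_atTop)
  refine tendsto_atTop_mono (fun k => ?_) h1
  rw [Nat.cast_tsub]
  exact le_add_self

open Topology in
lemma aux_level {X : Type*} [MetricSpace X] (R : Set (ℝ≥0 → X))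
    (hK2 : ∀ φ ∈ R, ∀ τ : ℝ≥0, (fun t => φ (t + τ)) ∈ R)
    (hK4 : ∀ (φ : ℕ → ℝ≥0 → X) (x₀ : X), (∀ n, φ n ∈ R) →
      Tendsto (fun n => φ n 0) atTop (nhds x₀) →
      ∃ ψ : ℕ → ℕ, StrictMono ψ ∧ ∃ φ' ∈ R,
        ∀ t : ℝ≥0, Tendsto (fun k => φ (ψ k) t) atTop (nhds (φ' t)))
    (A : Set X) (hA : IsCompact A) (hne : A.Nonempty)
    (hattr : Tendsto (fun t : ℝ≥0 => hausSemidist (msemiflowOfSet R t A) A) atTop (nhds 0))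
    (φ : ℕ → ℝ≥0 → X) (hφ : ∀ n, φ n ∈ R) (h0 : ∀ n, φ n 0 ∈ A)
    (ρ : ℕ → ℕ) (hρ : StrictMono ρ) (m : ℕ) :
    ∃ σ : ℕ → ℕ, StrictMono σ ∧ ∃ ψ ∈ R, (∀ t, ψ t ∈ A) ∧
      ∀ t : ℝ≥0, Tendsto (fun k => φ (ρ (σ k)) (t + ((ρ (σ k) : ℝ≥0) - (m : ℝ≥0)))) atTop
        (𝓝 (ψ t)) := by
  obtain ⟨a, ha, σ, hσ, hlim⟩ := aux_subseq hA hne _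
    (aux_attr hattr (fun k => φ (ρ k)) (fun k => hφ _) (fun k => h0 _) _ (aux_tau ρ hρ m 0))
  obtain ⟨σ', hσ', ψ, hψ, hl⟩ := hK4
    (fun k t => φ (ρ (σ k)) (t + ((ρ (σ k) : ℝ≥0) - (m : ℝ≥0)))) a
    (fun k => hK2 _ (hφ _) _) hlim
  refine ⟨σ ∘ σ', hσ.comp hσ', ψ, hψ, fun t => ?_, hl⟩
  have h2 := aux_attr hattr (fun k => φ (ρ (σ (σ' k)))) (fun k => hφ _) (fun k => h0 _) _
    (aux_tau (ρ ∘ σ ∘ σ') (hρ.comp (hσ.comp hσ')) m t)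
  have h3 := (Metric.continuous_infEDist (s := A)).continuousAt.tendsto.comp (hl t)
  have h4 := tendsto_nhds_unique h3 h2
  rw [← hA.isClosed.closure_eq, Metric.mem_closure_iff_infEDist_zero]
  exact h4

open Topology in
lemma aux_exists {X : Type*} [MetricSpace X] (R : Set (ℝ≥0 → X))
    (hK2 : ∀ φ ∈ R, ∀ τ : ℝ≥0, (fun t => φ (t + τ)) ∈ R)
    (hK4 : ∀ (φ : ℕ → ℝ≥0 → X) (x₀ : X), (∀ n, φ n ∈ R) →
      Tendsto (fun n => φ n 0) atTop (nhds x₀) →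
      ∃ ψ : ℕ → ℕ, StrictMono ψ ∧ ∃ φ' ∈ R,
        ∀ t : ℝ≥0, Tendsto (fun k => φ (ψ k) t) atTop (nhds (φ' t)))
    (A : Set X) (hA : IsCompact A)
    (hneg : ∀ t : ℝ≥0, A ⊆ msemiflowOfSet R t A)
    (hattr : Tendsto (fun t : ℝ≥0 => hausSemidist (msemiflowOfSet R t A) A) atTop (nhds 0))
    (a : X) (ha : a ∈ A) : ∃ γ : ℝ → X, BddCompleteTraj R γ ∧ γ 0 = a := by
  have hn : ∀ n : ℕ, ∃ φ ∈ R, φ 0 ∈ A ∧ φ n = a := by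
    intro n
    have := hneg n ha
    simp only [msemiflowOfSet, Set.mem_iUnion] at this
    obtain ⟨y, hy, φ, hφ, h0, h1⟩ := this
    exact ⟨φ, hφ, h0 ▸ hy, h1⟩
  choose φ hφ h0 hφn using hn
  let P : ℕ → (ℝ≥0 → X) → Prop := fun m ψ => ψ ∈ R ∧ (∀ t, ψ t ∈ A) ∧
    ∃ ρ : ℕ → ℕ, StrictMono ρ ∧
      ∀ t : ℝ≥0, Tendsto (fun k => φ (ρ k) (t + ((ρ k : ℝ≥0) - (m : ℝ≥0)))) atTop (𝓝 (ψ t))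
  have hbase : ∃ ψ, P 0 ψ ∧ ψ 0 = a := by
    obtain ⟨σ, hσ, ψ, hψ, hψA, hl⟩ := aux_level R hK2 hK4 A hA ⟨a, ha⟩ hattr φ hφ h0 id
      strictMono_id 0
    refine ⟨ψ, ⟨hψ, hψA, σ, hσ, hl⟩, ?_⟩
    refine tendsto_nhds_unique (hl 0) ?_
    simp [hφn]
  have hstep : ∀ m ψ, P m ψ → ∃ ψ', P (m + 1) ψ' ∧ ∀ t, ψ' (t + 1) = ψ t := by
    rintro m ψ ⟨hψ, hψA, ρ, hρ, hl⟩
    obtain ⟨σ, hσ, ψ', hψ', hψA', hl'⟩ := aux_level R hK2 hK4 A hA ⟨a, ha⟩ hattr φ hφ h0 ρ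
      hρ (m + 1)
    refine ⟨ψ', ⟨hψ', hψA', ρ ∘ σ, hρ.comp hσ, hl'⟩, fun t => ?_⟩
    refine tendsto_nhds_unique (hl' (t + 1)) (((hl t).comp hσ.tendsto_atTop).congr' ?_)
    filter_upwards [(hρ.comp hσ).tendsto_atTop.eventually_ge_atTop (m + 1)] with k hk
    simp only [Function.comp] at hk ⊢
    obtain ⟨j, hj⟩ := Nat.exists_eq_add_of_le hk
    congr 1
    rw [hj]
    have e1 : ((m + 1 + j : ℕ) : ℝ≥0) - (m : ℝ≥0) = 1 + j := by
      rw [← Nat.cast_tsub]; rw [show m + 1 + j - m = 1 + j by omega]; push_cast; rfl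
    have e2 : ((m + 1 + j : ℕ) : ℝ≥0) - ((m + 1 : ℕ) : ℝ≥0) = j := by
      rw [← Nat.cast_tsub]; rw [show m + 1 + j - (m + 1) = j by omega]
    rw [e1, e2, add_assoc]
  obtain ⟨ψ0, hP0, hψ0⟩ := hbase
  choose! F hFP hF using hstep
  let Ψ : ℕ → ℝ≥0 → X := fun m => Nat.rec ψ0 (fun m ψ => F m ψ) m
  have hΨP : ∀ m, P m (Ψ m) := by
    intro m
    induction m with
    | zero => exact hP0
    | succ m ih => exact hFP m _ ih
  have hΨ1 : ∀ m t, Ψ (m + 1) (t + 1) = Ψ m t := fun m t => hF m _ (hΨP m) t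
  have hΨj : ∀ j m t, Ψ (m + j) (t + j) = Ψ m t := by
    intro j
    induction j with
    | zero => intro m t; simp
    | succ j ih =>
      intro m t
      rw [← ih m t, ← hΨ1 (m + j)]
      push_cast
      rw [← add_assoc, ← add_assoc]
  let γ : ℝ → X := fun s => Ψ ⌈-s⌉₊ (Real.toNNReal (s + ⌈-s⌉₊))
  have hγ : ∀ (m : ℕ) (s : ℝ), 0 ≤ s + m → γ s = Ψ m (Real.toNNReal (s + m)) := by
    intro m s hs
    have h1 : ⌈-s⌉₊ ≤ m := Nat.ceil_le.2 (by linarith)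
    have h2 : -s ≤ ⌈-s⌉₊ := Nat.le_ceil _
    obtain ⟨j, hj⟩ := Nat.exists_eq_add_of_le h1
    show Ψ ⌈-s⌉₊ (Real.toNNReal (s + ⌈-s⌉₊)) = _
    generalize ⌈-s⌉₊ = p at *
    subst hj
    rw [← hΨj j p]
    congr 1
    have h5 : (0 : ℝ) ≤ s + p := by linarith
    have h6 : (0 : ℝ) ≤ (j : ℝ) := by positivity
    rw [Nat.cast_add, ← add_assoc, Real.toNNReal_add h5 h6, Real.toNNReal_natCast]
  refine ⟨γ, ⟨fun h => ?_, ?_⟩, ?_⟩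
  · have h2 : -h ≤ ⌈-h⌉₊ := Nat.le_ceil _
    have h3 := hK2 _ (hΨP ⌈-h⌉₊).1 (Real.toNNReal (h + ⌈-h⌉₊))
    convert h3 using 1
    funext t
    rw [hγ ⌈-h⌉₊ _ (by have := t.2; linarith [NNReal.coe_nonneg t]), add_assoc,
      Real.toNNReal_add (NNReal.coe_nonneg t) (by linarith), Real.toNNReal_coe]
  · refine hA.isBounded.subset ?_
    rintro _ ⟨s, rfl⟩
    exact (hΨP _).2.1 _
  · rw [hγ 0 0 (by simp)]
    have h7 : Ψ 0 0 = a := hψ0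
    simpa using h7

open Topology in
lemma aux_conv {X : Type*} [MetricSpace X] (R : Set (ℝ≥0 → X))
    (A : Set X) (hA : IsCompact A)
    (hattr : ∀ B : Set X, IsBounded B →
      Tendsto (fun t : ℝ≥0 => hausSemidist (msemiflowOfSet R t B) A) atTop (nhds 0))
    (γ : ℝ → X) (hγ : BddCompleteTraj R γ) (t : ℝ) : γ t ∈ A := by
  have h := aux_attr (hattr _ hγ.2)
    (fun n (s : ℝ≥0) => γ (s + (t - n))) (fun n => hγ.1 _) (fun n => ⟨_, rfl⟩)
    (fun n => (n : ℝ≥0)) tendsto_natCast_atTop_atTop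
  simp only [NNReal.coe_natCast, add_sub_cancel] at h
  have h4 := tendsto_nhds_unique h tendsto_const_nhds
  rw [← hA.isClosed.closure_eq, Metric.mem_closure_iff_infEDist_zero]
  exact (tendsto_nhds_unique h tendsto_const_nhds).symm

/-- If `R` satisfies (K1), (K2) and (K4) and the induced multivalued
semiflow `G` has a compact global attractor `A` (compact, negatively invariant,
attracting every bounded set), then
`A = {γ(0) : γ ∈ K} = ⋃_{t ∈ ℝ} {γ(t) : γ ∈ K}`, where `K` is the set of all
bounded complete trajectories of `R`. -/
theorem statement19 {X : Type*} [MetricSpace X] (R : Set (ℝ≥0 → X))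
    (hRc : ∀ φ ∈ R, Continuous φ)
    (hK1 : ∀ x : X, ∃ φ ∈ R, φ 0 = x)
    (hK2 : ∀ φ ∈ R, ∀ τ : ℝ≥0, (fun t => φ (t + τ)) ∈ R)
    (hK4 : ∀ (φ : ℕ → ℝ≥0 → X) (x₀ : X), (∀ n, φ n ∈ R) →
      Tendsto (fun n => φ n 0) atTop (nhds x₀) →
      ∃ ψ : ℕ → ℕ, StrictMono ψ ∧ ∃ φ' ∈ R,
        ∀ t : ℝ≥0, Tendsto (fun k => φ (ψ k) t) atTop (nhds (φ' t)))
    (A : Set X) (hAcomp : IsCompact A)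
    (hneg : ∀ t : ℝ≥0, A ⊆ msemiflowOfSet R t A)
    (hattr : ∀ B : Set X, IsBounded B →
      Tendsto (fun t : ℝ≥0 => hausSemidist (msemiflowOfSet R t B) A) atTop (nhds 0)) :
    A = {x | ∃ γ : ℝ → X, BddCompleteTraj R γ ∧ γ 0 = x} ∧
    A = ⋃ t : ℝ, {x | ∃ γ : ℝ → X, BddCompleteTraj R γ ∧ γ t = x} := by
  have hsub : ∀ a ∈ A, ∃ γ : ℝ → X, BddCompleteTraj R γ ∧ γ 0 = a :=
    aux_exists R hK2 hK4 A hAcomp hneg (hattr A hAcomp.isBounded)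
  have hconv := aux_conv R A hAcomp hattr
  constructor
  · ext x
    constructor
    · exact hsub x
    · rintro ⟨γ, hγ, rfl⟩
      exact hconv γ hγ 0
  · ext x
    simp only [Set.mem_iUnion]
    constructor
    · intro hx
      exact ⟨0, hsub x hx⟩
    · rintro ⟨t, γ, hγ, rfl⟩
      exact hconv γ hγ t
end
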